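/- If M is a set of edges of a graph G that is not a proper marker set (i.e., some non-isolated connected component of G contains no edge of M), then the number of consistent cuts (V1, V2) of G with M ⊆ E(G[V1]) is even. -/

import Mathlib

/-!
Let `c` be a non-isolated connected component containing no marker. Moving `c` to the other side
of a consistent cut gives another consistent cut, because no edge leaves `c`, `c` has no isolated
vertex, and every marker stays on its side. Since `c` is nonempty, this is an involution without
fixed points, which pairs up the cuts being counted.
-/

open scoped symmDiff

theorem even_natCard_of_involutive {α : Type*} [Finite α] {f : α → α}
    (hf : Function.Involutive f) (hfix : ∀ a, f a ≠ a) : Even (Nat.card α) := by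
  have := Fintype.ofFinite α
  have hsq : hf.toPerm ^ 2 ^ 1 = 1 := Equiv.ext hf
  rw [Nat.card_eq_fintype_card, even_iff_two_dvd]
  by_contra hodd
  obtain ⟨a, ha⟩ := Equiv.Perm.exists_fixed_point_of_prime hodd hsq
  exact hfix a ha

theorem even_natCard_of_forall_symmDiff_mem {α : Type*} [GeneralizedBooleanAlgebra α] {s : Set α}
    [Finite s] {b : α} (hb : b ≠ ⊥) (hs : ∀ a ∈ s, a ∆ b ∈ s) : Even (Nat.card s) :=
  even_natCard_of_involutive (f := fun a : s ↦ ⟨a ∆ b, hs a a.2⟩)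
    (fun a ↦ Subtype.ext (symmDiff_symmDiff_cancel_right b (a : α)))
    fun _ h ↦ hb (symmDiff_eq_left.1 (congrArg Subtype.val h))

section ConsistentCuts

variable {V : Type*} {G : SimpleGraph V} {M : Set (Sym2 V)}

variable (G M) in
/-- The consistent cuts `(V₁, V₂)` of `G` with `M ⊆ E(G[V₁])`, each encoded by its side `V₁`. -/
def consistentCuts : Set (Set V) :=
  {A | (∀ u v : V, G.Adj u v → (u ∈ A ↔ v ∈ A)) ∧
    (∀ v : V, (∀ w : V, ¬ G.Adj v w) → v ∈ A) ∧
    (∀ u w : V, s(u, w) ∈ M → u ∈ A ∧ w ∈ A)}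

variable (G M) in
/-- A proper marker set: each non-isolated connected component, given by one of its vertices,
contains an edge of `M`. -/
def IsProperMarkerSet : Prop :=
  ∀ v : V, (∃ w, G.Adj v w) → ∃ u w : V, G.Adj u w ∧ s(u, w) ∈ M ∧ G.Reachable v u

theorem supp_connectedComponentMk_subset_support {v : V} (hv : v ∈ G.support) :
    (G.connectedComponentMk v).supp ⊆ G.support := by
  intro x hx
  by_cases hxv : x = v
  · exact hxv ▸ hv
  · exact SimpleGraph.mem_support_of_reachable hxv (SimpleGraph.ConnectedComponent.eq.1 hx)

theorem symmDiff_supp_mem_consistentCuts {c : G.ConnectedComponent} (hc : c.supp ⊆ G.support)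
    (hcM : ∀ u w : V, s(u, w) ∈ M → u ∉ c.supp ∧ w ∉ c.supp) {A : Set V}
    (hA : A ∈ consistentCuts G M) : A ∆ c.supp ∈ consistentCuts G M := by
  obtain ⟨hadj, hisolated, hmarked⟩ := hA
  refine ⟨fun u v huv ↦ ?_, fun v hv ↦ ?_, fun u w huw ↦ ?_⟩
  · rw [Set.mem_symmDiff, Set.mem_symmDiff, hadj u v huv, c.mem_supp_congr_adj huv]
  · have hvc : v ∉ c.supp := fun h ↦ (hc h).elim hv
    exact Or.inl ⟨hisolated v hv, hvc⟩
  · obtain ⟨huA, hwA⟩ := hmarked u w huw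
    obtain ⟨huc, hwc⟩ := hcM u w huw
    exact ⟨Or.inl ⟨huA, huc⟩, Or.inl ⟨hwA, hwc⟩⟩

theorem exists_unmarked_component_of_not_isProperMarkerSet (hM : M ⊆ G.edgeSet)
    (hproper : ¬ IsProperMarkerSet G M) :
    ∃ c : G.ConnectedComponent, c.supp ⊆ G.support ∧
      ∀ u w : V, s(u, w) ∈ M → u ∉ c.supp ∧ w ∉ c.supp := by
  simp only [IsProperMarkerSet, not_forall] at hproper
  obtain ⟨v, hv, hunmarked⟩ := hproper
  refine ⟨G.connectedComponentMk v, supp_connectedComponentMk_subset_support hv, fun u w huw ↦ ?_⟩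
  have huw_adj : G.Adj u w := hM huw
  have hu : u ∉ (G.connectedComponentMk v).supp := fun h ↦
    hunmarked ⟨u, w, huw_adj, huw, (SimpleGraph.ConnectedComponent.eq.1 h).symm⟩
  exact ⟨hu, mt (SimpleGraph.ConnectedComponent.mem_supp_congr_adj _ huw_adj).2 hu⟩

theorem copath_stmt2_general [Finite (consistentCuts G M)] (hM : M ⊆ G.edgeSet)
    (hproper : ¬ IsProperMarkerSet G M) : Even (Nat.card (consistentCuts G M)) := by
  obtain ⟨c, hc, hcM⟩ := exists_unmarked_component_of_not_isProperMarkerSet hM hproper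
  exact even_natCard_of_forall_symmDiff_mem c.nonempty_supp.ne_empty fun _ hA ↦
    symmDiff_supp_mem_consistentCuts hc hcM hA

end ConsistentCuts

/-- If `M ⊆ E(G)` is not a proper marker set (some non-isolated connected component of
`G` contains no edge of `M`), then the number of consistent cuts `(V1, V2)` of `G` with
`M ⊆ E(G[V1])` is even. -/
theorem copath_stmt2 {V : Type*} [Fintype V] (G : SimpleGraph V) (M : Set (Sym2 V))
    (hM : M ⊆ G.edgeSet)
    (notProper : ∃ v : V, (∃ w, G.Adj v w) ∧
      ¬ ∃ u w : V, G.Adj u w ∧ s(u, w) ∈ M ∧ G.Reachable v u) :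
    Even (Nat.card {A : Set V // (∀ u v : V, G.Adj u v → (u ∈ A ↔ v ∈ A)) ∧
        (∀ v : V, (∀ w : V, ¬ G.Adj v w) → v ∈ A) ∧
        (∀ u w : V, s(u, w) ∈ M → u ∈ A ∧ w ∈ A)}) := by
  obtain ⟨v, hv, hunmarked⟩ := notProper
  exact copath_stmt2_general hM fun hproper ↦ hunmarked (hproper v hv)
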